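/- Let σ be the endomorphism of ℤ⁵ (with standard basis e₁, e₂, e₃, e₄, e₅) defined by σ(e₁) = 4e₁ − e₂ − e₃ − e₄ + 2e₅, σ(e₂) = 2e₁ − e₂ − e₃ − e₅, σ(e₃) = 2e₁ − e₃ − e₄ − e₅, σ(e₄) = 2e₁ − e₂ − e₄ − e₅, σ(e₅) = 3e₁ − 2e₅ (so σ³ = id). Define φ' : ℤ/3ℤ → ℤ⁵ by φ'(0) = 0, φ'(1) = e₂ − e₄, φ'(2) = e₂ − e₃. Then φ' is a 1-cocycle for the action of the cyclic group ℤ/3ℤ on ℤ⁵ in which the generator acts by σ (i.e. φ'(m + n) = φ'(m) + σ^m(φ'(n)) for all m, n ∈ ℤ/3ℤ), and φ' is not a coboundary: there is no v ∈ ℤ⁵ with φ'(1) = σ(v) − v. -/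

import Mathlib

/-!
The cocycle identity for a cyclic group only has to be checked at its generator, where it amounts to
`σ (e₂ - e₄) = e₄ - e₃` and `σ (e₂ - e₃) = e₄ - e₂`. A `σ`-invariant functional kills every
coboundary, whereas `v ↦ v₁ + v₂ - v₄` modulo 3 is `σ`-invariant and takes the value 2 at `e₂ - e₄`.
-/

section Cocycle

variable {R M : Type*} [Semiring R] [AddCommMonoid M] [Module R M] {f : Module.End R M}

theorem map_nsmul_add_of_map_add {A : Type*} [AddMonoid A] {φ : A → M} {g : A}
    (hφ₀ : φ 0 = 0) (hφ : ∀ a, φ (g + a) = φ g + f (φ a)) (m : ℕ) (a : A) :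
    φ (m • g + a) = φ (m • g) + (f ^ m) (φ a) := by
  induction m with
  | zero => rw [zero_nsmul, zero_add, hφ₀, zero_add, pow_zero, Module.End.one_apply]
  | succ m ih =>
    calc φ ((m + 1) • g + a) = φ (g + (m • g + a)) := by rw [succ_nsmul', add_assoc]
      _ = φ g + (f (φ (m • g)) + f ((f ^ m) (φ a))) := by rw [hφ, ih, map_add]
      _ = φ ((m + 1) • g) + (f ^ (m + 1)) (φ a) := by
        rw [succ_nsmul', hφ, pow_succ', Module.End.mul_apply, add_assoc]

theorem map_add_of_map_one_add {n : ℕ} [NeZero n] {φ : ZMod n → M} (hφ₀ : φ 0 = 0)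
    (hφ : ∀ k, φ (1 + k) = φ 1 + f (φ k)) (m k : ZMod n) :
    φ (m + k) = φ m + (f ^ m.val) (φ k) := by
  simpa only [nsmul_one, ZMod.natCast_zmod_val] using map_nsmul_add_of_map_add hφ₀ hφ m.val k

end Cocycle

theorem not_exists_eq_map_sub_of_comp_eq {R M N : Type*} [Ring R] [AddCommGroup M] [Module R M]
    [AddCommGroup N] [Module R N] {f : Module.End R M} {ℓ : M →ₗ[R] N} (hℓ : ℓ ∘ₗ f = ℓ)
    {a : M} (ha : ℓ a ≠ 0) : ¬∃ v, a = f v - v := by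
  rintro ⟨v, rfl⟩
  exact ha (by rw [map_sub, ← LinearMap.comp_apply, hℓ, sub_self])

/-- The functional `v ↦ v₁ + v₂ - v₄` modulo 3, which separates `e₂ - e₄` from the coboundaries.
Solving `ℓ (σ eᵢ) = ℓ eᵢ` modulo 3 shows that the `σ`-invariant functionals are spanned by this one
and `v ↦ v₂ + v₃ + v₄`, which vanishes at `e₂ - e₄`. -/
def obstructionModThree : (Fin 5 → ℤ) →ₗ[ℤ] ZMod 3 :=
  Fintype.linearCombination ℤ ![1, 1, 0, -1, 0]

/-- The map `φ'` with `φ'(0) = 0`, `φ'(1) = e₂ - e₄`, `φ'(2) = e₂ - e₃` is a 1-cocycle for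
the action of `ℤ/3ℤ` on `ℤ⁵` in which the generator acts by `σ`, and it is not a
coboundary. -/
theorem explicit_cocycle_is_nontrivial
    (σ : (Fin 5 → ℤ) →ₗ[ℤ] (Fin 5 → ℤ))
    (h₁ : σ (Pi.single 0 1) = ![4, -1, -1, -1, 2])
    (h₂ : σ (Pi.single 1 1) = ![2, -1, -1, 0, -1])
    (h₃ : σ (Pi.single 2 1) = ![2, 0, -1, -1, -1])
    (h₄ : σ (Pi.single 3 1) = ![2, -1, 0, -1, -1])
    (h₅ : σ (Pi.single 4 1) = ![3, 0, 0, 0, -2])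
    (φ : ZMod 3 → (Fin 5 → ℤ))
    (hφ₀ : φ 0 = 0)
    (hφ₁ : φ 1 = ![0, 1, 0, -1, 0])
    (hφ₂ : φ 2 = ![0, 1, -1, 0, 0]) :
    (∀ m n : ZMod 3, φ (m + n) = φ m + (σ ^ m.val) (φ n)) ∧
    ¬∃ v : Fin 5 → ℤ, φ 1 = σ v - v := by
  constructor
  · have σ_φ_one : σ (φ 1) = φ 2 - φ 1 := by
      have φ_one : φ 1 = Pi.single 1 1 - Pi.single 3 1 := by rw [hφ₁]; decide
      rw [φ_one, map_sub, h₂, h₄, hφ₂]; decide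
    have σ_φ_two : σ (φ 2) = -φ 1 := by
      have φ_two : φ 2 = Pi.single 1 1 - Pi.single 2 1 := by rw [hφ₂]; decide
      rw [φ_two, map_sub, h₂, h₃, hφ₁]; decide
    refine map_add_of_map_one_add hφ₀ fun k => ?_
    fin_cases k
    · change φ 1 = φ 1 + σ (φ 0)
      rw [hφ₀, map_zero, add_zero]
    · change φ 2 = φ 1 + σ (φ 1)
      rw [σ_φ_one, add_sub_cancel]
    · change φ 0 = φ 1 + σ (φ 2)
      rw [σ_φ_two, hφ₀, add_neg_cancel]
  · have obstruction_comp : obstructionModThree ∘ₗ σ = obstructionModThree := by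
      refine (Pi.basisFun ℤ (Fin 5)).ext fun i => ?_
      rw [LinearMap.comp_apply, Pi.basisFun_apply]
      fin_cases i <;>
        simp only [Fin.zero_eta, Fin.mk_one, Fin.reduceFinMk, h₁, h₂, h₃, h₄, h₅] <;> decide
    exact not_exists_eq_map_sub_of_comp_eq obstruction_comp (by rw [hφ₁]; decide)
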